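/- Let n be a positive integer. Then 4·δ(n) < n + 12 if and only if both of the following hold: (a) n is not of the form p, 2p, 3p or 4p for any odd prime p; and (b) n is not one of the numbers 4, 6, 8, 16, 18, 24, 25, 27, 30, 32, 35, 36, 40. Moreover, 4·δ(n) = n + 12 if and only if n ∈ {4, 36, 40}. -/

import Mathlib

/-- `staircaseDelta n` is the minimum of `r + s` over all pairs of positive
integers `(r, s)` with `r ≤ s` and `r * s = n`. -/
noncomputable def staircaseDelta (n : ℕ) : ℕ :=
  sInf {w : ℕ | ∃ r s : ℕ, 0 < r ∧ r ≤ s ∧ r * s = n ∧ w = r + s}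

lemma delta_spec (n : ℕ) (hn : 0 < n) : ∃ r s : ℕ, 0 < r ∧ r ≤ s ∧ r * s = n ∧
    staircaseDelta n = r + s :=
  Nat.sInf_mem (s := {w : ℕ | ∃ r s : ℕ, 0 < r ∧ r ≤ s ∧ r * s = n ∧ w = r + s})
    ⟨1 + n, 1, n, one_pos, hn, one_mul n, rfl⟩

lemma delta_le (n r s : ℕ) (hn : 0 < n) (h : r * s = n) : staircaseDelta n ≤ r + s := by
  have hr : 0 < r := by
    rcases Nat.eq_zero_or_pos r with h0 | h0
    · subst h0; omega
    · exact h0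
  have hs : 0 < s := by
    rcases Nat.eq_zero_or_pos s with h0 | h0
    · subst h0; omega
    · exact h0
  rcases le_total r s with h1 | h1
  · exact Nat.sInf_le ⟨r, s, hr, h1, h, rfl⟩
  · exact Nat.sInf_le ⟨s, r, hs, h1, by rw [mul_comm]; exact h, add_comm _ _⟩

lemma delta_lt_iff (n m : ℕ) (hn : 0 < n) : 4 * staircaseDelta n < m ↔
    ∃ r ∈ Finset.range (n + 1), ∃ s ∈ Finset.range (n + 1), r * s = n ∧ 4 * (r + s) < m := by
  constructor
  · intro h
    obtain ⟨r, s, hr, hrs, hm, he⟩ := delta_spec n hn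
    refine ⟨r, ?_, s, ?_, hm, by rw [← he]; exact h⟩
    · rw [Finset.mem_range]; nlinarith
    · rw [Finset.mem_range]; nlinarith
  · rintro ⟨r, -, s, -, hm, h⟩
    have := delta_le n r s hn hm
    omega

lemma big_of_factor (n r s : ℕ) (hn : 40 < n) (h : r * s = n) (hr : 5 ≤ r) (hs : 5 ≤ s) :
    4 * staircaseDelta n < n + 12 := by
  have h1 := delta_le n r s (by omega) h
  suffices 4 * (r + s) < n + 12 by omega
  obtain ⟨a, rfl⟩ := Nat.exists_eq_add_of_le hr
  obtain ⟨b, rfl⟩ := Nat.exists_eq_add_of_le hs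
  by_contra hc
  have hab : a * b + a + b ≤ 3 := by nlinarith
  have ha : a ≤ 3 := by nlinarith [Nat.zero_le (a * b)]
  have hb : b ≤ 3 := by nlinarith [Nat.zero_le (a * b)]
  interval_cases a <;> interval_cases b <;> omega

lemma exists_split (m : ℕ) (h2 : 2 ≤ m) (hm : ¬ m.Prime) :
    ∃ q k, q.Prime ∧ q ≤ k ∧ q * k = m ∧ m.minFac = q :=
  ⟨m.minFac, m / m.minFac, Nat.minFac_prime (by omega), Nat.minFac_le_div (by omega) hm,
    Nat.mul_div_cancel' (Nat.minFac_dvd m), rfl⟩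

lemma big_lt (n : ℕ) (hn : 40 < n)
    (h : ∀ p : ℕ, Nat.Prime p → Odd p → n ≠ p ∧ n ≠ 2 * p ∧ n ≠ 3 * p ∧ n ≠ 4 * p) :
    4 * staircaseDelta n < n + 12 := by
  have odd : ∀ p : ℕ, p.Prime → 10 < p → Odd p := fun p hp h => hp.odd_of_ne_two (by omega)
  have hnp : ¬ n.Prime := fun hp => (h n hp (odd n hp (by omega))).1 rfl
  obtain ⟨p, m, hp, hpm, hmul, hmin⟩ := exists_split n (by omega) hnp
  have hp2 := hp.two_le
  by_cases hp5 : 5 ≤ p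
  · exact big_of_factor n p m hn hmul hp5 (by omega)
  have hmp : ¬ m.Prime := by
    intro hm
    have hp4 : p ≠ 4 := by rintro rfl; revert hp; decide
    have : p = 2 ∨ p = 3 := by omega
    rcases this with rfl | rfl
    · exact (h m hm (odd m hm (by omega))).2.1 hmul.symm
    · exact (h m hm (odd m hm (by omega))).2.2.1 hmul.symm
  obtain ⟨q, k, hq, hqk, hmul2, hmin2⟩ := exists_split m (by omega) hmp
  have hq2 := hq.two_le
  have hpq : p ≤ q := by
    rw [← hmin]
    exact Nat.minFac_le_of_dvd hq2 ⟨p * k, by rw [← hmul, ← hmul2]; ring⟩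
  by_cases hk : 5 ≤ k ∧ 5 ≤ p * q
  · exact big_of_factor n (p * q) k hn (by rw [← hmul, ← hmul2]; ring) hk.2 hk.1
  by_cases hk5 : 5 ≤ k
  · have h4 : p * q < 5 := by
      by_contra hc; exact hk ⟨hk5, by omega⟩
    have hp' : p = 2 := by nlinarith
    have hq' : q = 2 := by subst hp'; omega
    subst hp' hq'
    have hkp : ¬ k.Prime := fun hkp =>
      (h k hkp (odd k hkp (by omega))).2.2.2 (by omega)
    obtain ⟨a, b, ha, hab, hmul3, -⟩ := exists_split k (by omega) hkp
    have ha2 := ha.two_le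
    by_cases hb : 5 ≤ b
    · exact big_of_factor n (4 * a) b hn (by rw [mul_assoc, hmul3]; omega) (by omega) hb
    · have hb4 : b ≤ 4 := by omega
      have ha4 : a ≤ 4 := by omega
      interval_cases b <;> interval_cases a <;> try omega
      · exact big_of_factor n 6 8 hn (by omega) (by omega) (by omega)
      · exact big_of_factor n 8 8 hn (by omega) (by omega) (by omega)
  · have hk4 : k ≤ 4 := by omega
    have hq4 : q ≤ 4 := by omega
    have hp4 : p ≤ 4 := by omega
    have hq4' : q ≠ 4 := by rintro rfl; revert hq; decide
    have hp4' : p ≠ 4 := by rintro rfl; revert hp; decide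
    interval_cases q <;> interval_cases k <;> interval_cases p <;> omega

lemma big_conv (n k p : ℕ) (hn : 40 < n) (hk : 1 ≤ k) (hk4 : k ≤ 4) (hp : p.Prime)
    (h : n = k * p) : n + 12 < 4 * staircaseDelta n := by
  obtain ⟨r, s, hr, hrs, hm, he⟩ := delta_spec n (by omega)
  rw [he]
  clear he
  have hp10 : 10 < p := by nlinarith
  have key : ∀ r s : ℕ, r * s = n → p ∣ s → n + 12 < 4 * (r + s) := by
    rintro r s hm ⟨t, rfl⟩
    have hrt : r * t = k := by
      apply Nat.eq_of_mul_eq_mul_right hp.pos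
      rw [← h, ← hm]; ring
    have ht : t ≤ 4 := by
      by_contra hc
      rcases Nat.eq_zero_or_pos r with h0 | h0
      · subst h0; omega
      · nlinarith
    have ht0 : 0 < t := by
      rcases Nat.eq_zero_or_pos t with h0 | h0
      · subst h0; omega
      · exact h0
    subst h
    interval_cases t <;> interval_cases k <;> omega
  have : p ∣ r * s := by rw [hm, h]; exact dvd_mul_left _ _
  rcases hp.dvd_mul.1 this with h1 | h1
  · have := key s r (by rw [mul_comm]; exact hm) h1
    omega
  · exact key r s hm h1

lemma a_iff (n : ℕ) (hn : 0 < n) :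
    (∀ p : ℕ, Nat.Prime p → Odd p → n ≠ p ∧ n ≠ 2 * p ∧ n ≠ 3 * p ∧ n ≠ 4 * p) ↔
    ∀ p ∈ Finset.range (n + 1), Nat.Prime p → p % 2 = 1 →
      n ≠ p ∧ n ≠ 2 * p ∧ n ≠ 3 * p ∧ n ≠ 4 * p := by
  constructor
  · intro h p _ hp ho
    exact h p hp (Nat.odd_iff.2 ho)
  · intro h p hp ho
    by_cases hpn : p < n + 1
    · exact h p (Finset.mem_range.2 hpn) hp (Nat.odd_iff.1 ho)
    · omega

lemma small_case : ∀ n ∈ Finset.range 41, 0 < n →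
    (((∃ r ∈ Finset.range (n + 1), ∃ s ∈ Finset.range (n + 1), r * s = n ∧ 4 * (r + s) < n + 12) ↔
      (∀ p ∈ Finset.range (n + 1), Nat.Prime p → p % 2 = 1 →
        n ≠ p ∧ n ≠ 2 * p ∧ n ≠ 3 * p ∧ n ≠ 4 * p) ∧
      n ∉ ({4, 6, 8, 16, 18, 24, 25, 27, 30, 32, 35, 36, 40} : Finset ℕ)) ∧
    (((∃ r ∈ Finset.range (n + 1), ∃ s ∈ Finset.range (n + 1), r * s = n ∧ 4 * (r + s) < n + 13) ∧
      ¬ (∃ r ∈ Finset.range (n + 1), ∃ s ∈ Finset.range (n + 1), r * s = n ∧ 4 * (r + s) < n + 12))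
      ↔ n ∈ ({4, 36, 40} : Finset ℕ))) := by
  decide +kernel

/-- For a positive integer `n`, `4·δ(n) < n + 12` iff (a) `n ≠ p, 2p, 3p, 4p` for
every odd prime `p`, and (b) `n` is not one of listed exceptional numbers; moreover
`4·δ(n) = n + 12` iff `n ∈ {4, 36, 40}`. -/
theorem stmt7 (n : ℕ) (hn : 0 < n) :
    (4 * staircaseDelta n < n + 12 ↔
      (∀ p : ℕ, Nat.Prime p → Odd p → n ≠ p ∧ n ≠ 2 * p ∧ n ≠ 3 * p ∧ n ≠ 4 * p) ∧
      n ∉ ({4, 6, 8, 16, 18, 24, 25, 27, 30, 32, 35, 36, 40} : Set ℕ)) ∧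
    (4 * staircaseDelta n = n + 12 ↔ n ∈ ({4, 36, 40} : Set ℕ)) := by
  by_cases hb : n < 41
  · have h := small_case n (Finset.mem_range.2 hb) hn
    rw [← delta_lt_iff n _ hn, ← delta_lt_iff n _ hn, ← a_iff n hn] at h
    simp only [Finset.mem_insert, Finset.mem_singleton] at h
    simp only [Set.mem_insert_iff, Set.mem_singleton_iff]
    refine ⟨h.1, ?_⟩
    rw [← h.2]
    omega
  · have hn40 : 40 < n := by omega
    have h1 : n ∉ ({4, 6, 8, 16, 18, 24, 25, 27, 30, 32, 35, 36, 40} : Set ℕ) := by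
      simp only [Set.mem_insert_iff, Set.mem_singleton_iff]; omega
    have h2 : n ∉ ({4, 36, 40} : Set ℕ) := by
      simp only [Set.mem_insert_iff, Set.mem_singleton_iff]; omega
    by_cases ha : ∀ p : ℕ, Nat.Prime p → Odd p → n ≠ p ∧ n ≠ 2 * p ∧ n ≠ 3 * p ∧ n ≠ 4 * p
    · have h3 := big_lt n hn40 ha
      exact ⟨⟨fun _ => ⟨ha, h1⟩, fun _ => h3⟩, ⟨fun h => by omega, fun h => absurd h h2⟩⟩
    · have h3 : n + 12 < 4 * staircaseDelta n := by
        by_contra hc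
        apply ha
        intro p hp _
        refine ⟨fun h => hc ?_, fun h => hc ?_, fun h => hc ?_, fun h => hc ?_⟩
        · exact big_conv n 1 p hn40 (by omega) (by omega) hp (by omega)
        · exact big_conv n 2 p hn40 (by omega) (by omega) hp h
        · exact big_conv n 3 p hn40 (by omega) (by omega) hp h
        · exact big_conv n 4 p hn40 (by omega) (by omega) hp h
      exact ⟨⟨fun h => by omega, fun h => absurd h.1 ha⟩,
        ⟨fun h => by omega, fun h => absurd h h2⟩⟩
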